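/- Let J ⊆ Δ. The element z^J = w_Δ w_J lies in W^J and is the greatest element of W^J for the order ≤_J: for every w ∈ W^J one has w ≤_J z^J, and z^J is the unique element of W^J that is maximal with respect to <_J. Moreover z^J ∈ V^J, and for every u ∈ W with z^J ≤_∅ u and every s ∈ S with ℓ(s z^J) < ℓ(z^J), one has ℓ(su) < ℓ(u). -/

import Mathlib

/-! Common framework: a reduced (crystallographic) root system `Φ` in a real vector
space `V`, with Weyl group `W` (generated by the reflections `s_α`, `α ∈ Φ`, inside the
group of linear automorphisms of `V`), a base `Δ` of simple roots with positive system
`Pos = Φ⁺`, and the associated combinatorics. -/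

open scoped Classical Pointwise

namespace PaperSp

variable {V : Type} [AddCommGroup V] [Module ℝ V]

/-- The data of a reduced crystallographic root system in `V`:  a finite spanning set
`Phi` of nonzero vectors together with, for each root `α`, a linear functional
`pairing α = ⟨·, α∨⟩` taking the value `2` at `α`, such that the associated reflections
`s_α : β ↦ β − ⟨β, α∨⟩α` preserve `Phi`, all pairings are integral, and the only
multiples of a root `α` which are roots are `±α`. -/
structure RootSystemData (V : Type) [AddCommGroup V] [Module ℝ V] : Type where
  Phi : Set V
  pairing : V → V →ₗ[ℝ] ℝ
  pairing_self : ∀ α, α ∈ Phi → pairing α α = 2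
  finite : Phi.Finite
  span_top : Submodule.span ℝ Phi = ⊤
  zero_not_mem : (0 : V) ∉ Phi
  crystallographic : ∀ α ∈ Phi, ∀ β ∈ Phi, ∃ n : ℤ, pairing α β = (n : ℝ)
  reduced : ∀ α ∈ Phi, ∀ t : ℝ, t • α ∈ Phi → t = 1 ∨ t = -1
  reflect_mem : ∀ α ∈ Phi, ∀ β ∈ Phi, β - pairing α β • α ∈ Phi

/-- The reflection `s_α` associated to a root `α` (the identity if `α ∉ Φ`). -/
noncomputable def RootSystemData.refl (R : RootSystemData V) (α : V) : V ≃ₗ[ℝ] V :=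
  if h : α ∈ R.Phi then Module.reflection (R.pairing_self α h) else 1

/-- The set of reflections `{s_α : α ∈ K}` associated to a set `K` of roots. -/
noncomputable def refls (R : RootSystemData V) (K : Set V) : Set (V ≃ₗ[ℝ] V) :=
  {s | ∃ α ∈ K, s = R.refl α}

/-- The Weyl group `W`, generated by all reflections `s_α`, `α ∈ Φ`. -/
noncomputable def weylGroup (R : RootSystemData V) : Subgroup (V ≃ₗ[ℝ] V) :=
  Subgroup.closure (refls R R.Phi)

/-- The subgroup `W_J` generated by the reflections `s_α`, `α ∈ J`. -/
noncomputable def WsubJ (R : RootSystemData V) (J : Set V) : Subgroup (V ≃ₗ[ℝ] V) :=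
  Subgroup.closure (refls R J)

/-- The word length of `w` with respect to a generating set `S` of a group. -/
noncomputable def lengthWrt {G : Type*} [Group G] (S : Set G) (w : G) : ℕ :=
  sInf {n | ∃ ls : List G, ls.length = n ∧ (∀ x ∈ ls, x ∈ S) ∧ ls.prod = w}

/-- The length function `ℓ` on `W` with respect to the simple reflections
`S = {s_α : α ∈ Δ}`. -/
noncomputable def len (R : RootSystemData V) (Δ : Set V) (w : V ≃ₗ[ℝ] V) : ℕ :=
  lengthWrt (refls R Δ) w

/-- `Pos` and `Δ` form a positive system with base `Δ` for the root system `R`: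
`Φ = Pos ⊔ (−Pos)`, `Δ ⊆ Pos` is linearly independent, and every positive root is a
nonnegative integral combination of simple roots. -/
structure IsBase (R : RootSystemData V) (Pos Δ : Set V) : Prop where
  pos_sub : Pos ⊆ R.Phi
  mem_or_neg : ∀ α ∈ R.Phi, α ∈ Pos ∨ -α ∈ Pos
  not_both : ∀ α : V, ¬(α ∈ Pos ∧ -α ∈ Pos)
  delta_sub : Δ ⊆ Pos
  indep : LinearIndependent ℝ (fun a : Δ => (a : V))
  decomp : ∀ β ∈ Pos, ∃ c : V →₀ ℕ, (c.support : Set V) ⊆ Δ ∧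
    β = c.sum (fun a m => (m : ℝ) • a)

/-- The set `W^J = {w ∈ W : w(α) ∈ Φ⁺ for all α ∈ J}` of minimal length representatives
of `W/W_J`. -/
noncomputable def WupJ (R : RootSystemData V) (Pos : Set V) (J : Set V) :
    Set (V ≃ₗ[ℝ] V) :=
  {w | w ∈ weylGroup R ∧ ∀ α ∈ J, w α ∈ Pos}

/-- The set `V^J = W^J \ ⋃_{α ∈ Δ\J} W^{J∪{α}}`. -/
noncomputable def VupJ (R : RootSystemData V) (Pos Δ : Set V) (J : Set V) :
    Set (V ≃ₗ[ℝ] V) :=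
  {w | w ∈ WupJ R Pos J ∧ ∀ α ∈ Δ, α ∉ J → w ∉ WupJ R Pos (J ∪ {α})}

/-- `Φ_J(1) = Φ⁻ \ (Φ⁻ ∩ W_J·J)`. -/
noncomputable def PhiJone (R : RootSystemData V) (Pos : Set V) (J : Set V) : Set V :=
  (R.Phi \ Pos) \ {β | ∃ v ∈ WsubJ R J, ∃ α ∈ J, β = v α}

/-- `Φ_J(w) = w · Φ_J(1)`. -/
noncomputable def PhiJ (R : RootSystemData V) (Pos : Set V) (J : Set V)
    (w : V ≃ₗ[ℝ] V) : Set V :=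
  (fun x => w x) '' (PhiJone R Pos J)

/-- `hProjJ R Pos J pJ` says that `pJ` is the projection `w ↦ (w)^J` sending an element
of `W` to the unique element of `W^J` in the coset `w W_J`. -/
noncomputable def IsProjJ (R : RootSystemData V) (Pos : Set V) (J : Set V)
    (pJ : (V ≃ₗ[ℝ] V) → (V ≃ₗ[ℝ] V)) : Prop :=
  ∀ w ∈ weylGroup R, pJ w ∈ WupJ R Pos J ∧ (pJ w)⁻¹ * w ∈ WsubJ R J

/-- The product `s_i ⋯ s_1` of the first `i` members of a sequence in a group. -/
noncomputable def chainProd {G : Type*} [Group G] (s : ℕ → G) (i : ℕ) : G :=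
  (((List.range' 1 i).map s).reverse).prod

/-- The chain `w^(0) = w`, `w^(i) = (s_i ⋯ s_1 w)^J` associated to `w` and a sequence
of simple reflections. -/
noncomputable def chainElt {G : Type*} [Group G] (pJ : G → G) (s : ℕ → G) (w : G)
    (i : ℕ) : G :=
  if i = 0 then w else pJ (chainProd s i * w)

/-- The partial order `<_J`:  `w <_J w'` iff there are simple reflections
`s_1, …, s_r` (`r ≥ 1`) such that, with `w^(i) = (s_i ⋯ s_1 w)^J`, the lengths
`ℓ(w^(i))` are strictly increasing and `w^(r) = w'`.  Taking `pJ = id`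
(and `J = ∅`) gives the weak left order `<_∅`. -/
noncomputable def ltJ {G : Type*} [Group G] (S : Set G) (ℓ : G → ℕ) (pJ : G → G)
    (w w' : G) : Prop :=
  ∃ r : ℕ, 1 ≤ r ∧ ∃ s : ℕ → G,
    (∀ m, 1 ≤ m → m ≤ r → s m ∈ S) ∧
    (∀ m, 1 ≤ m → m ≤ r → ℓ (chainElt pJ s w (m - 1)) < ℓ (chainElt pJ s w m)) ∧
    chainElt pJ s w r = w'

/-- `w` is the longest element of a subgroup `H` of `W` (with respect to `ℓ`). -/
noncomputable def IsLongestIn (R : RootSystemData V) (Δ : Set V)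
    (H : Subgroup (V ≃ₗ[ℝ] V)) (w : V ≃ₗ[ℝ] V) : Prop :=
  w ∈ H ∧ ∀ v ∈ H, len R Δ v ≤ len R Δ w

end PaperSp

/-!
Let the height modulo `J` be the linear form counting the simple roots outside `J`. It is invariant
under `W_J`; a root of nonzero height is positive iff its height is, and a positive root of height
zero is a nonnegative combination of `J`. Hence `w_J` reverses the sign of exactly the roots of
height zero, while `w_Δ` reverses all signs, so `z^J` reverses exactly the signs of the roots of
nonzero height.

If `w ∈ W^J` is not `z^J`, then `z^J w⁻¹ ≠ 1` makes some simple root `α` negative. Comparing signs,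
`w⁻¹ α` is a positive root outside `J`, so `s_α w` is a longer element of `W^J`. Such steps climb
from `w` to `z^J`.

A simple root `α` is a left descent of `z^J` iff `w_Δ⁻¹ α` has nonzero height. Climbing further by
left ascents from `z^J` to `u` does not change the form `v ↦ height (u⁻¹ v)`: it starts as
`v ↦ height (w_Δ⁻¹ v)`, and `s_β` can only be an ascent if this form vanishes at `β`. So every left
descent of `z^J` remains one of `u`.
-/

namespace PaperSp

section Length

variable {G : Type*} [Group G] {S : Set G}

theorem lengthWrt_prod_le {l : List G} (hl : ∀ x ∈ l, x ∈ S) :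
    lengthWrt S l.prod ≤ l.length :=
  Nat.sInf_le ⟨l, rfl, hl, rfl⟩

theorem exists_list_length_eq_lengthWrt (hS : S⁻¹ = S) {w : G} (hw : w ∈ Subgroup.closure S) :
    ∃ l : List G, l.length = lengthWrt S w ∧ (∀ x ∈ l, x ∈ S) ∧ l.prod = w := by
  have hw' : w ∈ Submonoid.closure S := by
    rwa [← Subgroup.mem_toSubmonoid, Subgroup.closure_toSubmonoid, hS, Set.union_self] at hw
  obtain ⟨l, hl, hprod⟩ := Submonoid.exists_list_of_mem_closure hw'
  exact Nat.sInf_mem (s := {n | ∃ l : List G, l.length = n ∧ (∀ x ∈ l, x ∈ S) ∧ l.prod = w})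
    ⟨l.length, l, rfl, hl, hprod⟩

theorem lengthWrt_inv (hS : S⁻¹ = S) (w : G) : lengthWrt S w⁻¹ = lengthWrt S w := by
  have inv_word : ∀ (u : G) (n : ℕ),
      (∃ l : List G, l.length = n ∧ (∀ x ∈ l, x ∈ S) ∧ l.prod = u) →
        ∃ l : List G, l.length = n ∧ (∀ x ∈ l, x ∈ S) ∧ l.prod = u⁻¹ := by
    rintro _ _ ⟨l, rfl, hl, rfl⟩
    refine ⟨(l.map fun x => x⁻¹).reverse, by simp, fun x hx => ?_, (List.prod_inv_reverse l).symm⟩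
    obtain ⟨y, hy, rfl⟩ := List.mem_map.mp (List.mem_reverse.mp hx)
    exact hS ▸ Set.inv_mem_inv.mpr (hl y hy)
  unfold lengthWrt
  congr 1
  ext n
  exact ⟨fun h => inv_inv w ▸ inv_word _ n h, inv_word w n⟩

end Length

section Chain

variable {G : Type*} [Group G] {S : Set G} {ℓ : G → ℕ} {pJ : G → G}

theorem chainProd_zero (s : ℕ → G) : chainProd s 0 = 1 := rfl

theorem chainProd_succ (s : ℕ → G) (m : ℕ) :
    chainProd s (m + 1) = s (m + 1) * chainProd s m := by
  simp [chainProd, List.range'_1_concat, add_comm]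

theorem chainElt_succ (s : ℕ → G) (w : G) (m : ℕ) :
    chainElt pJ s w (m + 1) = pJ (s (m + 1) * (chainProd s m * w)) := by
  rw [chainElt, if_neg m.succ_ne_zero, chainProd_succ, mul_assoc]

theorem chainElt_id (s : ℕ → G) (w : G) (m : ℕ) : chainElt id s w m = chainProd s m * w := by
  cases m with
  | zero => rw [chainProd_zero, one_mul]; rfl
  | succ m => rw [chainElt_succ, chainProd_succ, mul_assoc]; rfl

theorem chainProd_congr {s t : ℕ → G} {m : ℕ} (h : ∀ i, 1 ≤ i → i ≤ m → s i = t i) :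
    chainProd s m = chainProd t m := by
  induction m with
  | zero => rfl
  | succ m ih =>
    rw [chainProd_succ, chainProd_succ, h (m + 1) (by lia) le_rfl,
      ih fun i hi him => h i hi (by lia)]

theorem chainElt_congr {s t : ℕ → G} {m : ℕ} (h : ∀ i, 1 ≤ i → i ≤ m → s i = t i) (w : G) :
    chainElt pJ s w m = chainElt pJ t w m := by
  rw [chainElt, chainElt, chainProd_congr h]

/-- `y = t x` is longer than `x` for some `t ∈ S`, and is fixed by `pJ`. When `pJ` is the
projection onto `W^J`, these are the steps of `<_J` along which `w^(i)` is `s_i ⋯ s_1 w` itself. -/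
def IsLeftAscent (S : Set G) (ℓ : G → ℕ) (pJ : G → G) (x y : G) : Prop :=
  ∃ t ∈ S, y = t * x ∧ ℓ x < ℓ y ∧ pJ y = y

theorem ltJ_of_transGen {w z : G} (h : Relation.TransGen (IsLeftAscent S ℓ pJ) w z) :
    ltJ S ℓ pJ w z := by
  suffices ∃ r, 1 ≤ r ∧ ∃ s : ℕ → G, (∀ m, 1 ≤ m → m ≤ r → s m ∈ S) ∧
      (∀ m, 1 ≤ m → m ≤ r → ℓ (chainElt pJ s w (m - 1)) < ℓ (chainElt pJ s w m)) ∧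
      chainElt pJ s w r = z ∧ chainProd s r * w = z by
    obtain ⟨r, hr, s, hs, hlt, hz, -⟩ := this
    exact ⟨r, hr, s, hs, hlt, hz⟩
  induction h with
  | single h =>
    obtain ⟨t, ht, rfl, hlt, hfix⟩ := h
    have hend : chainElt pJ (fun _ => t) w 1 = t * w := by
      rw [chainElt_succ, chainProd_zero, one_mul, hfix]
    refine ⟨1, le_rfl, fun _ => t, fun _ _ _ => ht, fun m h1 hm => ?_, hend, ?_⟩
    · obtain rfl : m = 1 := le_antisymm hm h1
      rwa [hend]
    · rw [chainProd_succ, chainProd_zero, mul_one]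
  | @tail x y _ h ih =>
    obtain ⟨r, -, s, hs, hlt, hx, hprod⟩ := ih
    obtain ⟨t, ht, rfl, hlt', hfix⟩ := h
    set s' := Function.update s (r + 1) t
    have hs' : ∀ i ≤ r, s' i = s i := fun i hi => Function.update_of_ne (by lia) t s
    have hlast : s' (r + 1) = t := Function.update_self (r + 1) t s
    have hprod' : chainProd s' r = chainProd s r := chainProd_congr fun i _ => hs' i
    have helt : ∀ m ≤ r, chainElt pJ s' w m = chainElt pJ s w m := fun m hm =>
      chainElt_congr (fun i _ hi => hs' i (hi.trans hm)) w
    have hend : chainElt pJ s' w (r + 1) = t * x := by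
      rw [chainElt_succ, hlast, hprod', hprod, hfix]
    refine ⟨r + 1, by lia, s', fun m h1 hm => ?_, fun m h1 hm => ?_, hend, ?_⟩
    · rcases hm.eq_or_lt with rfl | hm
      · rwa [hlast]
      · rw [hs' m (by lia)]
        exact hs m h1 (by lia)
    · rcases hm.eq_or_lt with rfl | hm
      · rwa [Nat.add_sub_cancel, helt r le_rfl, hx, hend]
      · rw [helt m (by lia), helt (m - 1) (by lia)]
        exact hlt m h1 (by lia)
    · rw [chainProd_succ, hlast, hprod', mul_assoc, hprod]

theorem reflTransGen_of_ltJ_id {w u : G} (h : ltJ S ℓ id w u) :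
    Relation.ReflTransGen (IsLeftAscent S ℓ id) w u := by
  obtain ⟨r, -, s, hs, hlt, rfl⟩ := h
  have hreach : ∀ m ≤ r, Relation.ReflTransGen (IsLeftAscent S ℓ id) w (chainElt id s w m) := by
    intro m hm
    induction m with
    | zero => exact Relation.ReflTransGen.refl
    | succ m ih =>
      refine (ih (by lia)).tail ⟨s (m + 1), hs _ (by lia) hm, ?_, hlt (m + 1) (by lia) hm, rfl⟩
      rw [chainElt_id, chainElt_id, chainProd_succ, mul_assoc]
  exact hreach r le_rfl

end Chain

section WeylGroup

variable {V : Type} [AddCommGroup V] [Module ℝ V] (R : RootSystemData V)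

theorem RootSystemData.refl_apply {α : V} (hα : α ∈ R.Phi) (v : V) :
    R.refl α v = v - R.pairing α v • α := by
  rw [RootSystemData.refl, dif_pos hα, Module.reflection_apply]

theorem RootSystemData.refl_mul_self (α : V) : R.refl α * R.refl α = 1 := by
  unfold RootSystemData.refl
  split_ifs with hα
  · ext v
    exact Module.involutive_reflection (R.pairing_self α hα) v
  · exact one_mul 1

theorem RootSystemData.refl_inv (α : V) : (R.refl α)⁻¹ = R.refl α :=
  inv_eq_of_mul_eq_one_left (R.refl_mul_self α)

theorem RootSystemData.refl_self {α : V} (hα : α ∈ R.Phi) : R.refl α α = -α := by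
  rw [R.refl_apply hα, R.pairing_self α hα, two_smul, sub_add_cancel_left]

theorem inv_refls (K : Set V) : (refls R K)⁻¹ = refls R K := by
  ext x
  constructor
  · rintro ⟨α, hα, hx⟩
    exact ⟨α, hα, by rw [← inv_inv x, hx, R.refl_inv]⟩
  · rintro ⟨α, hα, rfl⟩
    exact ⟨α, hα, R.refl_inv α⟩

variable {R} {J K : Set V} {w : V ≃ₗ[ℝ] V}

theorem refl_mem_WsubJ {α : V} (hα : α ∈ K) : R.refl α ∈ WsubJ R K :=
  Subgroup.subset_closure ⟨α, hα, rfl⟩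

theorem refl_mem_weylGroup {α : V} (hα : α ∈ R.Phi) : R.refl α ∈ weylGroup R :=
  refl_mem_WsubJ hα

theorem WsubJ_mono (h : J ⊆ K) : WsubJ R J ≤ WsubJ R K :=
  Subgroup.closure_mono fun _ ⟨α, hα, hs⟩ => ⟨α, h hα, hs⟩

theorem WsubJ_induction {p : (V ≃ₗ[ℝ] V) → Prop} (one : p 1)
    (refl_mul : ∀ α ∈ K, ∀ x ∈ WsubJ R K, p x → p (R.refl α * x)) (hw : w ∈ WsubJ R K) :
    p w := by
  obtain ⟨l, -, hl, rfl⟩ := exists_list_length_eq_lengthWrt (inv_refls R K) hw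
  clear hw
  induction l with
  | nil => exact one
  | cons t l ih =>
    obtain ⟨⟨α, hα, rfl⟩, hl'⟩ := List.forall_mem_cons.mp hl
    have hmem : l.prod ∈ WsubJ R K :=
      Subgroup.list_prod_mem _ fun x hx => Subgroup.subset_closure (hl' x hx)
    exact refl_mul α hα _ hmem (ih hl')

theorem map_mem_Phi (hw : w ∈ weylGroup R) {β : V} (hβ : β ∈ R.Phi) : w β ∈ R.Phi := by
  refine WsubJ_induction (p := fun w => w β ∈ R.Phi) hβ (fun α hα x _ hx => ?_) hw
  rw [LinearEquiv.mul_apply, R.refl_apply hα]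
  exact R.reflect_mem α hα _ hx

theorem neg_mem_Phi {α : V} (hα : α ∈ R.Phi) : -α ∈ R.Phi :=
  R.refl_self hα ▸ map_mem_Phi (refl_mem_weylGroup hα) hα

theorem finite_weylGroup (R : RootSystemData V) : Finite (weylGroup R) := by
  have := R.finite.to_subtype
  refine Finite.of_injective
    (fun (w : weylGroup R) (β : R.Phi) => (⟨w.1 β, map_mem_Phi w.2 β.2⟩ : R.Phi)) ?_
  intro u v huv
  refine Subtype.ext (LinearEquiv.toLinearMap_injective (LinearMap.ext_on R.span_top ?_))
  exact fun β hβ => congrArg Subtype.val (congrFun huv ⟨β, hβ⟩)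

theorem pairing_map (hw : w ∈ weylGroup R) {α : V} (hα : α ∈ R.Phi) (v : V) :
    R.pairing (w α) (w v) = R.pairing α v := by
  have hwα := map_mem_Phi hw hα
  have heq : R.pairing (w α) = R.pairing α ∘ₗ w.symm.toLinearMap := by
    refine Module.Dual.eq_of_preReflection_mapsTo (x := w α) R.finite R.span_top
      (R.pairing_self _ hwα) (R.reflect_mem _ hwα) ?_ fun β hβ => ?_
    · rw [LinearMap.comp_apply, LinearEquiv.coe_coe, w.symm_apply_apply, R.pairing_self α hα]
    · have hβ' := map_mem_Phi hw (R.reflect_mem α hα _ (map_mem_Phi (inv_mem hw) hβ))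
      rwa [map_sub, map_smul, show w (w⁻¹ β) = β from w.apply_symm_apply β] at hβ'
  rw [heq, LinearMap.comp_apply, LinearEquiv.coe_coe, w.symm_apply_apply]

theorem refl_map (hw : w ∈ weylGroup R) {α : V} (hα : α ∈ R.Phi) :
    R.refl (w α) = w * R.refl α * w⁻¹ := by
  rw [eq_mul_inv_iff_mul_eq]
  ext v
  simp only [LinearEquiv.mul_apply, R.refl_apply (map_mem_Phi hw hα), R.refl_apply hα,
    pairing_map hw hα, map_sub, map_smul]

theorem refl_neg {α : V} (hα : α ∈ R.Phi) : R.refl (-α) = R.refl α := by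
  rw [← R.refl_self hα, refl_map (refl_mem_weylGroup hα) hα, R.refl_mul_self, one_mul, R.refl_inv]

theorem len_inv (R : RootSystemData V) (Δ : Set V) (w : V ≃ₗ[ℝ] V) :
    len R Δ w⁻¹ = len R Δ w :=
  lengthWrt_inv (inv_refls R Δ) w

theorem len_refl_mul (R : RootSystemData V) (Δ : Set V) (w : V ≃ₗ[ℝ] V) (α : V) :
    len R Δ (R.refl α * w) = len R Δ (w⁻¹ * R.refl α) := by
  rw [← len_inv, mul_inv_rev, R.refl_inv]

theorem exists_isLongestIn (Δ : Set V) {H : Subgroup (V ≃ₗ[ℝ] V)} (hH : H ≤ weylGroup R) :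
    ∃ w, IsLongestIn R Δ H w :=
  Set.exists_max_image (H : Set (V ≃ₗ[ℝ] V)) (len R Δ)
    (Set.Finite.subset (finite_weylGroup R) hH) ⟨1, one_mem H⟩

theorem IsLongestIn.inv {Δ : Set V} {H : Subgroup (V ≃ₗ[ℝ] V)} (hw : IsLongestIn R Δ H w) :
    IsLongestIn R Δ H w⁻¹ :=
  ⟨inv_mem hw.1, fun v hv => (hw.2 v hv).trans_eq (len_inv R Δ w).symm⟩

end WeylGroup

namespace IsBase

variable {V : Type} [AddCommGroup V] [Module ℝ V] {R : RootSystemData V} {Pos Δ J : Set V}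
  {w : V ≃ₗ[ℝ] V}

section Sign

theorem mem_Phi (hB : IsBase R Pos Δ) {α : V} (hα : α ∈ Δ) : α ∈ R.Phi :=
  hB.pos_sub (hB.delta_sub hα)

theorem neg_mem_pos_iff (hB : IsBase R Pos Δ) {γ : V} (hγ : γ ∈ R.Phi) :
    -γ ∈ Pos ↔ γ ∉ Pos :=
  ⟨fun h h' => hB.not_both γ ⟨h', h⟩, (hB.mem_or_neg γ hγ).resolve_left⟩

theorem mem_closure_of_mem_pos (hB : IsBase R Pos Δ) {β : V} (hβ : β ∈ Pos) :
    β ∈ AddSubmonoid.closure Δ := by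
  obtain ⟨c, hc, rfl⟩ := hB.decomp β hβ
  refine AddSubmonoid.sum_mem _ fun a ha => ?_
  simp only [Nat.cast_smul_eq_nsmul]
  exact AddSubmonoid.nsmul_mem _ (AddSubmonoid.subset_closure (hc ha)) _

/-- The height of a vector modulo `J`: the sum of its coordinates along `Δ \ J`. It is encoded as
the linear form with value `0` on `J` and `1` on the other members of a basis containing `Δ`. -/
noncomputable def relHeight (hB : IsBase R Pos Δ) (J : Set V) : V →ₗ[ℝ] ℝ :=
  (Module.Basis.extend (s := Δ) hB.indep).constr ℝ fun a => if (a : V) ∈ J then 0 else 1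

theorem relHeight_simple (hB : IsBase R Pos Δ) (J : Set V) {α : V} (hα : α ∈ Δ) :
    hB.relHeight J α = if α ∈ J then 0 else 1 := by
  have hbasis : Module.Basis.extend (s := Δ) hB.indep
      ⟨α, Module.Basis.subset_extend (s := Δ) hB.indep hα⟩ = α :=
    Module.Basis.extend_apply_self (s := Δ) hB.indep _
  conv_lhs => rw [← hbasis, relHeight, Module.Basis.constr_basis]

theorem relHeight_simple_eq_zero_iff (hB : IsBase R Pos Δ) {α : V} (hα : α ∈ Δ) :
    hB.relHeight J α = 0 ↔ α ∈ J := by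
  rw [hB.relHeight_simple J hα, ite_eq_left_iff]
  exact ⟨fun h => by_contra fun hαJ => one_ne_zero (h hαJ), fun hαJ h => absurd hαJ h⟩

theorem relHeight_nonneg (hB : IsBase R Pos Δ) (J : Set V) {x : V}
    (hx : x ∈ AddSubmonoid.closure Δ) : 0 ≤ hB.relHeight J x := by
  induction hx using AddSubmonoid.closure_induction with
  | mem α hα => rw [hB.relHeight_simple J hα]; split_ifs <;> norm_num
  | zero => rw [map_zero]
  | add x y _ _ hx hy => rw [map_add]; exact add_nonneg hx hy

theorem mem_closure_of_relHeight_eq_zero (hB : IsBase R Pos Δ) {x : V}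
    (hx : x ∈ AddSubmonoid.closure Δ) (h0 : hB.relHeight J x = 0) :
    x ∈ AddSubmonoid.closure J := by
  induction hx using AddSubmonoid.closure_induction with
  | mem α hα => exact AddSubmonoid.subset_closure ((hB.relHeight_simple_eq_zero_iff hα).mp h0)
  | zero => exact zero_mem _
  | add x y hx hy ihx ihy =>
    rw [map_add, add_eq_zero_iff_of_nonneg (hB.relHeight_nonneg J hx)
      (hB.relHeight_nonneg J hy)] at h0
    exact add_mem (ihx h0.1) (ihy h0.2)

theorem relHeight_self (hB : IsBase R Pos Δ) {γ : V} (hγ : γ ∈ R.Phi) :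
    hB.relHeight Δ γ = 0 := by
  have hclosure : ∀ x ∈ AddSubmonoid.closure Δ, hB.relHeight Δ x = 0 := fun x hx => by
    induction hx using AddSubmonoid.closure_induction with
    | mem α hα => exact (hB.relHeight_simple_eq_zero_iff hα).mpr hα
    | zero => exact map_zero _
    | add x y _ _ hx hy => rw [map_add, hx, hy, add_zero]
  rcases hB.mem_or_neg γ hγ with h | h
  · exact hclosure γ (hB.mem_closure_of_mem_pos h)
  · rw [← neg_eq_zero, ← map_neg, hclosure _ (hB.mem_closure_of_mem_pos h)]

theorem mem_pos_iff_relHeight_pos (hB : IsBase R Pos Δ) {γ : V} (hγ : γ ∈ R.Phi)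
    (h0 : hB.relHeight J γ ≠ 0) : γ ∈ Pos ↔ 0 < hB.relHeight J γ := by
  refine ⟨fun h => (hB.relHeight_nonneg J (hB.mem_closure_of_mem_pos h)).lt_of_ne' h0,
    fun h => by_contra fun hγ' => ?_⟩
  have hneg := hB.relHeight_nonneg J (hB.mem_closure_of_mem_pos ((hB.neg_mem_pos_iff hγ).mpr hγ'))
  rw [map_neg] at hneg
  linarith

theorem mem_pos_of_mem_closure (hB : IsBase R Pos Δ) {γ : V} (hγ : γ ∈ R.Phi)
    (h : γ ∈ AddSubmonoid.closure Δ) : γ ∈ Pos := by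
  have h0 : hB.relHeight ∅ γ ≠ 0 := fun h0 => by
    have hγ0 := hB.mem_closure_of_relHeight_eq_zero h h0
    rw [AddSubmonoid.closure_empty, AddSubmonoid.mem_bot] at hγ0
    exact R.zero_not_mem (hγ0 ▸ hγ)
  exact (hB.mem_pos_iff_relHeight_pos hγ h0).mpr ((hB.relHeight_nonneg ∅ h).lt_of_ne' h0)

theorem map_mem_pos (hB : IsBase R Pos Δ) {f : V →ₗ[ℝ] V} (hf : ∀ α ∈ J, f α ∈ Pos) {β : V}
    (hβ : β ∈ Pos) (h0 : hB.relHeight J β = 0) (hfβ : f β ∈ R.Phi) : f β ∈ Pos := by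
  have hle : AddSubmonoid.closure J ≤ (AddSubmonoid.closure Δ).comap f :=
    AddSubmonoid.closure_le.mpr fun α hα => hB.mem_closure_of_mem_pos (hf α hα)
  exact hB.mem_pos_of_mem_closure hfβ
    (hle (hB.mem_closure_of_relHeight_eq_zero (hB.mem_closure_of_mem_pos hβ) h0))

theorem map_mem_pos_iff_of_mem_WupJ (hB : IsBase R Pos Δ) (hw : w ∈ WupJ R Pos J) {γ : V}
    (hγ : γ ∈ R.Phi) (h0 : hB.relHeight J γ = 0) : w γ ∈ Pos ↔ γ ∈ Pos := by
  have hpos : ∀ β ∈ Pos, hB.relHeight J β = 0 → w β ∈ Pos := fun β hβ hβ0 =>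
    hB.map_mem_pos (f := w.toLinearMap) hw.2 hβ hβ0 (map_mem_Phi hw.1 (hB.pos_sub hβ))
  refine ⟨fun h => by_contra fun hn => ?_, fun h => hpos γ h h0⟩
  have hneg := hpos (-γ) ((hB.neg_mem_pos_iff hγ).mpr hn) (by rw [map_neg, h0, neg_zero])
  rw [map_neg] at hneg
  exact hB.not_both _ ⟨h, hneg⟩

theorem map_mem_pos_iff_notMem (hB : IsBase R Pos Δ) (hJ : J ⊆ Δ) (hw : w ∈ weylGroup R)
    (hwJ : ∀ α ∈ J, w α ∉ Pos) {γ : V} (hγ : γ ∈ R.Phi) (h0 : hB.relHeight J γ = 0) :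
    w γ ∈ Pos ↔ γ ∉ Pos := by
  have hneg : ∀ β ∈ Pos, hB.relHeight J β = 0 → w β ∉ Pos := by
    intro β hβ hβ0
    have hw_neg : ∀ δ ∈ R.Phi, -w δ ∈ Pos ↔ w δ ∉ Pos := fun δ hδ =>
      hB.neg_mem_pos_iff (map_mem_Phi hw hδ)
    have hβΦ := hB.pos_sub hβ
    refine (hw_neg β hβΦ).mp (hB.map_mem_pos (f := -w.toLinearMap) (fun α hα => ?_) hβ hβ0 ?_)
    · exact (hw_neg α (hB.mem_Phi (hJ hα))).mpr (hwJ α hα)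
    · exact neg_mem_Phi (map_mem_Phi hw hβΦ)
  refine ⟨fun h hγ' => hneg γ hγ' h0 h, fun hγ' => by_contra fun h => ?_⟩
  refine hneg (-γ) ((hB.neg_mem_pos_iff hγ).mpr hγ') (by rw [map_neg, h0, neg_zero]) ?_
  rw [map_neg]
  exact (hB.neg_mem_pos_iff (map_mem_Phi hw hγ)).mpr h

theorem relHeight_refl (hB : IsBase R Pos Δ) {α : V} (hα : α ∈ R.Phi)
    (h0 : hB.relHeight J α = 0) (v : V) : hB.relHeight J (R.refl α v) = hB.relHeight J v := by
  rw [R.refl_apply hα, map_sub, map_smul, h0, smul_zero, sub_zero]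

theorem relHeight_map (hB : IsBase R Pos Δ) (hJ : J ⊆ Δ) (hw : w ∈ WsubJ R J) (v : V) :
    hB.relHeight J (w v) = hB.relHeight J v := by
  refine WsubJ_induction (p := fun w => hB.relHeight J (w v) = hB.relHeight J v) rfl
    (fun α hα x _ hx => ?_) hw
  have h0 : hB.relHeight J α = 0 := (hB.relHeight_simple_eq_zero_iff (hJ hα)).mpr hα
  rw [LinearEquiv.mul_apply, hB.relHeight_refl (hB.mem_Phi (hJ hα)) h0, hx]

theorem mem_pos_iff_of_relHeight_eq (hB : IsBase R Pos Δ) {β γ : V} (hβ : β ∈ R.Phi)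
    (hγ : γ ∈ R.Phi) (h0 : hB.relHeight J γ ≠ 0)
    (h : hB.relHeight J β = hB.relHeight J γ) : β ∈ Pos ↔ γ ∈ Pos := by
  rw [hB.mem_pos_iff_relHeight_pos hγ h0, hB.mem_pos_iff_relHeight_pos hβ (h ▸ h0), h]

theorem WsubJ_le_weylGroup (hB : IsBase R Pos Δ) (hJ : J ⊆ Δ) : WsubJ R J ≤ weylGroup R :=
  WsubJ_mono fun _ hα => hB.mem_Phi (hJ hα)

theorem map_mem_pos_iff_mem (hB : IsBase R Pos Δ) (hJ : J ⊆ Δ) (hw : w ∈ WsubJ R J) {γ : V}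
    (hγ : γ ∈ R.Phi) (h0 : hB.relHeight J γ ≠ 0) : w γ ∈ Pos ↔ γ ∈ Pos :=
  hB.mem_pos_iff_of_relHeight_eq (map_mem_Phi (hB.WsubJ_le_weylGroup hJ hw) hγ) hγ h0
    (hB.relHeight_map hJ hw γ)

theorem eq_of_relHeight_singleton_eq_zero (hB : IsBase R Pos Δ) {α β : V} (hα : α ∈ R.Phi)
    (hβ : β ∈ Pos) (h0 : hB.relHeight {α} β = 0) : β = α := by
  obtain ⟨n, rfl⟩ := AddSubmonoid.mem_closure_singleton.mp
    (hB.mem_closure_of_relHeight_eq_zero (hB.mem_closure_of_mem_pos hβ) h0)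
  have hn := hB.pos_sub hβ
  rw [← Nat.cast_smul_eq_nsmul ℝ] at hn ⊢
  rcases R.reduced α hα n hn with h | h
  · rw [h, one_smul]
  · linarith [n.cast_nonneg (α := ℝ)]

theorem refl_mem_pos (hB : IsBase R Pos Δ) {α β : V} (hα : α ∈ Δ) (hβ : β ∈ Pos)
    (hne : β ≠ α) : R.refl α β ∈ Pos := by
  have hαΦ := hB.mem_Phi hα
  have h0 : hB.relHeight {α} β ≠ 0 := mt (hB.eq_of_relHeight_singleton_eq_zero hαΦ hβ) hne
  exact (hB.map_mem_pos_iff_mem (Set.singleton_subset_iff.mpr hα) (refl_mem_WsubJ rfl)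
    (hB.pos_sub hβ) h0).mpr hβ

end Sign

section Exchange

theorem exchange (hB : IsBase R Pos Δ) {α : V} (hα : α ∈ Δ) {l : List (V ≃ₗ[ℝ] V)}
    (hl : ∀ x ∈ l, x ∈ refls R Δ) (hn : l.prod α ∉ Pos) :
    ∃ l' : List (V ≃ₗ[ℝ] V), l'.length < l.length ∧ (∀ x ∈ l', x ∈ refls R Δ) ∧
      l'.prod = l.prod * R.refl α := by
  induction l with
  | nil => exact absurd (hB.delta_sub hα) hn
  | cons t l ih =>
    obtain ⟨⟨β, hβ, rfl⟩, hl'⟩ := List.forall_mem_cons.mp hl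
    by_cases hpos : l.prod α ∈ Pos
    · have hβ_eq : l.prod α = β := by_contra fun hne => hn (hB.refl_mem_pos hβ hpos hne)
      have hmem : l.prod ∈ weylGroup R := hB.WsubJ_le_weylGroup subset_rfl
        (Subgroup.list_prod_mem _ fun x hx => Subgroup.subset_closure (hl' x hx))
      refine ⟨l, Nat.lt_succ_self _, hl', ?_⟩
      rw [List.prod_cons, ← hβ_eq, refl_map hmem (hB.mem_Phi hα), inv_mul_cancel_right, mul_assoc,
        R.refl_mul_self, mul_one]
    · obtain ⟨l', hlen, hmem, hprod⟩ := ih hl' hpos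
      refine ⟨R.refl β :: l', Nat.succ_lt_succ hlen,
        List.forall_mem_cons.mpr ⟨⟨β, hβ, rfl⟩, hmem⟩, ?_⟩
      rw [List.prod_cons, hprod, List.prod_cons, mul_assoc]

theorem len_mul_refl_lt (hB : IsBase R Pos Δ) (hw : w ∈ WsubJ R Δ) {α : V} (hα : α ∈ Δ)
    (hn : w α ∉ Pos) : len R Δ (w * R.refl α) < len R Δ w := by
  obtain ⟨l, hlen, hl, rfl⟩ := exists_list_length_eq_lengthWrt (inv_refls R Δ) hw
  obtain ⟨l', hlt, hl', hprod⟩ := hB.exchange hα hl hn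
  rw [← hprod]
  exact (lengthWrt_prod_le hl').trans_lt (hlt.trans_eq hlen)

theorem lt_len_mul_refl (hB : IsBase R Pos Δ) (hw : w ∈ WsubJ R Δ) {α : V} (hα : α ∈ Δ)
    (hpos : w α ∈ Pos) : len R Δ w < len R Δ (w * R.refl α) := by
  have hneg : (w * R.refl α) α ∉ Pos := by
    rw [LinearEquiv.mul_apply, R.refl_self (hB.mem_Phi hα), map_neg]
    exact fun h => hB.not_both _ ⟨hpos, h⟩
  have hlt := hB.len_mul_refl_lt (mul_mem hw (refl_mem_WsubJ hα)) hα hneg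
  rwa [mul_assoc, R.refl_mul_self, mul_one] at hlt

theorem longest_map_notMem_pos (hB : IsBase R Pos Δ) (hJ : J ⊆ Δ)
    (hw : IsLongestIn R Δ (WsubJ R J) w) {α : V} (hα : α ∈ J) : w α ∉ Pos := fun hpos =>
  (hB.lt_len_mul_refl (WsubJ_mono hJ hw.1) (hJ hα) hpos).not_ge
    (hw.2 _ (mul_mem hw.1 (refl_mem_WsubJ hα)))

theorem longest_map_mem_pos_iff (hB : IsBase R Pos Δ) (hJ : J ⊆ Δ)
    (hw : IsLongestIn R Δ (WsubJ R J) w) {γ : V} (hγ : γ ∈ R.Phi) (h0 : hB.relHeight J γ = 0) :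
    w γ ∈ Pos ↔ γ ∉ Pos :=
  hB.map_mem_pos_iff_notMem hJ (hB.WsubJ_le_weylGroup hJ hw.1)
    (fun _ => hB.longest_map_notMem_pos hJ hw) hγ h0

theorem exists_map_mem_simple (hB : IsBase R Pos Δ) {β : V} (hβ : β ∈ Pos) :
    ∃ v ∈ WsubJ R Δ, v β ∈ Δ := by
  have hsplit : ∀ w ∈ WsubJ R Δ, w β ∉ Pos → ∃ v ∈ WsubJ R Δ, v β ∈ Δ := fun w hw => by
    refine WsubJ_induction (p := fun w => w β ∉ Pos → ∃ v ∈ WsubJ R Δ, v β ∈ Δ)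
      (absurd hβ) (fun α hα x hx ih hn => ?_) hw
    by_cases hxβ : x β ∈ Pos
    · have hxα : x β = α := by_contra fun hne => hn (hB.refl_mem_pos hα hxβ hne)
      exact ⟨x, hx, hxα ▸ hα⟩
    · exact ih hxβ
  obtain ⟨w, hw⟩ := exists_isLongestIn Δ (hB.WsubJ_le_weylGroup subset_rfl)
  have hβΦ := hB.pos_sub hβ
  exact hsplit w hw.1 fun h =>
    (hB.longest_map_mem_pos_iff subset_rfl hw hβΦ (hB.relHeight_self hβΦ)).mp h hβ

theorem weylGroup_eq (hB : IsBase R Pos Δ) : weylGroup R = WsubJ R Δ := by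
  have hpos : ∀ β ∈ Pos, R.refl β ∈ WsubJ R Δ := fun β hβ => by
    obtain ⟨v, hv, hvβ⟩ := hB.exists_map_mem_simple hβ
    have hconj := refl_map (hB.WsubJ_le_weylGroup subset_rfl hv) (hB.pos_sub hβ)
    rw [show R.refl β = v⁻¹ * R.refl (v β) * v by rw [hconj]; group]
    exact mul_mem (mul_mem (inv_mem hv) (refl_mem_WsubJ hvβ)) hv
  refine le_antisymm ((Subgroup.closure_le _).mpr ?_) (hB.WsubJ_le_weylGroup subset_rfl)
  rintro _ ⟨γ, hγ, rfl⟩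
  rcases hB.mem_or_neg γ hγ with h | h
  · exact hpos γ h
  · exact refl_neg hγ ▸ hpos _ h

theorem len_refl_mul_lt_iff (hB : IsBase R Pos Δ) (hw : w ∈ weylGroup R) {α : V} (hα : α ∈ Δ) :
    len R Δ (R.refl α * w) < len R Δ w ↔ w⁻¹ α ∉ Pos := by
  have hw' : w⁻¹ ∈ WsubJ R Δ := hB.weylGroup_eq ▸ inv_mem hw
  rw [len_refl_mul, ← len_inv R Δ w]
  exact ⟨fun h hpos => h.not_gt (hB.lt_len_mul_refl hw' hα hpos), hB.len_mul_refl_lt hw' hα⟩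

theorem lt_len_refl_mul_iff (hB : IsBase R Pos Δ) (hw : w ∈ weylGroup R) {α : V} (hα : α ∈ Δ) :
    len R Δ w < len R Δ (R.refl α * w) ↔ w⁻¹ α ∈ Pos := by
  have hw' : w⁻¹ ∈ WsubJ R Δ := hB.weylGroup_eq ▸ inv_mem hw
  rw [len_refl_mul, ← len_inv R Δ w]
  exact ⟨fun h => by_contra fun hn => h.not_gt (hB.len_mul_refl_lt hw' hα hn),
    hB.lt_len_mul_refl hw' hα⟩

theorem eq_one_of_forall_map_mem_pos (hB : IsBase R Pos Δ) (hw : w ∈ weylGroup R)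
    (h : ∀ α ∈ Δ, w α ∈ Pos) : w = 1 := by
  rw [hB.weylGroup_eq] at hw
  obtain ⟨l, hlen, hl, hprod⟩ := exists_list_length_eq_lengthWrt (inv_refls R Δ) hw
  rcases List.eq_nil_or_concat' l with rfl | ⟨l', t, rfl⟩
  · exact hprod.symm
  · obtain ⟨hl', α, hα, rfl⟩ := List.forall_mem_append.mp hl |>.imp_right
      fun h => h t (List.mem_singleton_self t)
    have hcancel : w * R.refl α = l'.prod := by
      rw [← hprod, List.prod_append, List.prod_singleton, mul_assoc, R.refl_mul_self, mul_one]
    have hlt := hB.lt_len_mul_refl hw hα (h α hα)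
    rw [hcancel, len, ← hlen, List.length_append] at hlt
    have := hlt.trans_le (lengthWrt_prod_le hl')
    lia

end Exchange

section Projection

theorem eq_of_inv_mul_mem_WsubJ (hB : IsBase R Pos Δ) (hJ : J ⊆ Δ) {u v : V ≃ₗ[ℝ] V}
    (hu : u ∈ WupJ R Pos J) (hv : v ∈ WupJ R Pos J) (h : u⁻¹ * v ∈ WsubJ R J) : u = v := by
  have hW := hB.WsubJ_le_weylGroup hJ h
  refine inv_mul_eq_one.mp (hB.eq_one_of_forall_map_mem_pos hW fun α hα => ?_)
  have hαΦ := hB.mem_Phi hα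
  by_cases hαJ : α ∈ J
  · have h0 : hB.relHeight J ((u⁻¹ * v) α) = 0 := by
      rwa [hB.relHeight_map hJ h, hB.relHeight_simple_eq_zero_iff hα]
    rw [← hB.map_mem_pos_iff_of_mem_WupJ hu (map_mem_Phi hW hαΦ) h0, ← LinearEquiv.mul_apply,
      mul_inv_cancel_left]
    exact hv.2 α hαJ
  · exact (hB.map_mem_pos_iff_mem hJ h hαΦ (mt (hB.relHeight_simple_eq_zero_iff hα).mp hαJ)).mpr
      (hB.delta_sub hα)

theorem proj_eq_self (hB : IsBase R Pos Δ) (hJ : J ⊆ Δ) {pJ : (V ≃ₗ[ℝ] V) → (V ≃ₗ[ℝ] V)}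
    (hpJ : IsProjJ R Pos J pJ) (hw : w ∈ WupJ R Pos J) : pJ w = w :=
  hB.eq_of_inv_mul_mem_WsubJ hJ (hpJ w hw.1).1 hw (hpJ w hw.1).2

theorem refl_mul_mem_WupJ (hB : IsBase R Pos Δ) (hw : w ∈ WupJ R Pos J) {α : V} (hα : α ∈ Δ)
    (hn : w⁻¹ α ∉ J) : R.refl α * w ∈ WupJ R Pos J := by
  refine ⟨mul_mem (refl_mem_weylGroup (hB.mem_Phi hα)) hw.1, fun β hβ => ?_⟩
  have hne : w β ≠ α := by
    rintro rfl
    exact hn ((w.symm_apply_apply β).symm ▸ hβ)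
  exact hB.refl_mem_pos hα (hw.2 β hβ) hne

end Projection

section Greatest

variable {wD wJ : V ≃ₗ[ℝ] V}

theorem longest_weylGroup_map_mem_pos_iff (hB : IsBase R Pos Δ)
    (hwD : IsLongestIn R Δ (weylGroup R) wD) {γ : V} (hγ : γ ∈ R.Phi) : wD γ ∈ Pos ↔ γ ∉ Pos :=
  hB.longest_map_mem_pos_iff subset_rfl (hB.weylGroup_eq ▸ hwD) hγ (hB.relHeight_self hγ)

theorem longest_mul_longest_map_mem_pos_iff (hB : IsBase R Pos Δ) (hJ : J ⊆ Δ)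
    (hwD : IsLongestIn R Δ (weylGroup R) wD) (hwJ : IsLongestIn R Δ (WsubJ R J) wJ) {γ : V}
    (hγ : γ ∈ R.Phi) :
    (wD * wJ) γ ∈ Pos ↔ (hB.relHeight J γ = 0 ↔ γ ∈ Pos) := by
  rw [LinearEquiv.mul_apply, hB.longest_weylGroup_map_mem_pos_iff hwD
    (map_mem_Phi (hB.WsubJ_le_weylGroup hJ hwJ.1) hγ)]
  by_cases h0 : hB.relHeight J γ = 0
  · simp only [hB.longest_map_mem_pos_iff hJ hwJ hγ h0, h0, not_not, true_iff]
  · simp only [hB.map_mem_pos_iff_mem hJ hwJ.1 hγ h0, h0, false_iff]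

theorem longest_mul_longest_mem_WupJ (hB : IsBase R Pos Δ) (hJ : J ⊆ Δ)
    (hwD : IsLongestIn R Δ (weylGroup R) wD) (hwJ : IsLongestIn R Δ (WsubJ R J) wJ) :
    wD * wJ ∈ WupJ R Pos J := by
  refine ⟨mul_mem hwD.1 (hB.WsubJ_le_weylGroup hJ hwJ.1), fun α hα => ?_⟩
  rw [hB.longest_mul_longest_map_mem_pos_iff hJ hwD hwJ (hB.mem_Phi (hJ hα)),
    hB.relHeight_simple_eq_zero_iff (hJ hα)]
  exact iff_of_true hα (hB.delta_sub (hJ hα))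

theorem longest_mul_longest_mem_VupJ (hB : IsBase R Pos Δ) (hJ : J ⊆ Δ)
    (hwD : IsLongestIn R Δ (weylGroup R) wD) (hwJ : IsLongestIn R Δ (WsubJ R J) wJ) :
    wD * wJ ∈ VupJ R Pos Δ J := by
  refine ⟨hB.longest_mul_longest_mem_WupJ hJ hwD hwJ, fun α hα hαJ h => ?_⟩
  have hpos := h.2 α (Or.inr rfl)
  rw [hB.longest_mul_longest_map_mem_pos_iff hJ hwD hwJ (hB.mem_Phi hα),
    hB.relHeight_simple_eq_zero_iff hα] at hpos
  exact hαJ (hpos.mpr (hB.delta_sub hα))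

theorem eq_longest_mul_longest (hB : IsBase R Pos Δ) (hJ : J ⊆ Δ)
    (hwD : IsLongestIn R Δ (weylGroup R) wD) (hwJ : IsLongestIn R Δ (WsubJ R J) wJ)
    (hw : w ∈ WupJ R Pos J) (h : ∀ α ∈ Δ, w⁻¹ α ∈ Pos → w⁻¹ α ∈ J) : w = wD * wJ := by
  have hz : wD * wJ ∈ weylGroup R := mul_mem hwD.1 (hB.WsubJ_le_weylGroup hJ hwJ.1)
  refine (mul_inv_eq_one.mp (hB.eq_one_of_forall_map_mem_pos
    (mul_mem hz (inv_mem hw.1)) fun α hα => ?_)).symm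
  have hγ : w⁻¹ α ∈ R.Phi := map_mem_Phi (inv_mem hw.1) (hB.mem_Phi hα)
  rw [LinearEquiv.mul_apply, hB.longest_mul_longest_map_mem_pos_iff hJ hwD hwJ hγ]
  refine ⟨fun h0 => ?_, fun hpos => ?_⟩
  · rw [← hB.map_mem_pos_iff_of_mem_WupJ hw hγ h0, ← LinearEquiv.mul_apply, mul_inv_cancel]
    exact hB.delta_sub hα
  · exact (hB.relHeight_simple_eq_zero_iff (hJ (h α hα hpos))).mpr (h α hα hpos)

theorem exists_isLeftAscent (hB : IsBase R Pos Δ) (hJ : J ⊆ Δ)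
    {pJ : (V ≃ₗ[ℝ] V) → (V ≃ₗ[ℝ] V)} (hpJ : IsProjJ R Pos J pJ)
    (hwD : IsLongestIn R Δ (weylGroup R) wD) (hwJ : IsLongestIn R Δ (WsubJ R J) wJ)
    (hw : w ∈ WupJ R Pos J) (hne : w ≠ wD * wJ) :
    ∃ y ∈ WupJ R Pos J, IsLeftAscent (refls R Δ) (len R Δ) pJ w y := by
  obtain ⟨α, hα, hpos, hαJ⟩ : ∃ α ∈ Δ, w⁻¹ α ∈ Pos ∧ w⁻¹ α ∉ J := by
    by_contra! h
    exact hne (hB.eq_longest_mul_longest hJ hwD hwJ hw h)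
  have hy := hB.refl_mul_mem_WupJ hw hα hαJ
  exact ⟨R.refl α * w, hy, R.refl α, ⟨α, hα, rfl⟩, rfl, (hB.lt_len_refl_mul_iff hw.1 hα).mpr hpos,
    hB.proj_eq_self hJ hpJ hy⟩

theorem reflTransGen_isLeftAscent (hB : IsBase R Pos Δ) (hJ : J ⊆ Δ)
    {pJ : (V ≃ₗ[ℝ] V) → (V ≃ₗ[ℝ] V)} (hpJ : IsProjJ R Pos J pJ)
    (hwD : IsLongestIn R Δ (weylGroup R) wD) (hwJ : IsLongestIn R Δ (WsubJ R J) wJ)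
    (hw : w ∈ WupJ R Pos J) :
    Relation.ReflTransGen (IsLeftAscent (refls R Δ) (len R Δ) pJ) w (wD * wJ) := by
  induction hn : len R Δ wD - len R Δ w using Nat.strong_induction_on generalizing w with
  | _ n ih =>
    by_cases hne : w = wD * wJ
    · exact hne ▸ Relation.ReflTransGen.refl
    · obtain ⟨y, hy, hwy⟩ := hB.exists_isLeftAscent hJ hpJ hwD hwJ hw hne
      have hlt : len R Δ w < len R Δ y := hwy.elim fun _ h => h.2.2.1
      have hle := hwD.2 y hy.1
      exact Relation.ReflTransGen.head hwy (ih _ (by lia) hy rfl)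

end Greatest

section Descent

variable {wD wJ : V ≃ₗ[ℝ] V}

theorem longest_mul_longest_inv_map_mem_pos_iff (hB : IsBase R Pos Δ) (hJ : J ⊆ Δ)
    (hwD : IsLongestIn R Δ (weylGroup R) wD) (hwJ : IsLongestIn R Δ (WsubJ R J) wJ) {α : V}
    (hα : α ∈ Δ) : (wD * wJ)⁻¹ α ∈ Pos ↔ hB.relHeight J (wD⁻¹ α) = 0 := by
  have hαΦ := hB.mem_Phi hα
  have hγ : wD⁻¹ α ∈ R.Phi := map_mem_Phi (inv_mem hwD.1) hαΦ
  have hneg : wD⁻¹ α ∉ Pos := fun h =>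
    (hB.longest_weylGroup_map_mem_pos_iff hwD.inv hαΦ).mp h (hB.delta_sub hα)
  rw [mul_inv_rev, LinearEquiv.mul_apply]
  by_cases h0 : hB.relHeight J (wD⁻¹ α) = 0
  · simp only [hB.longest_map_mem_pos_iff hJ hwJ.inv hγ h0, hneg, h0, not_false_iff]
  · simp only [hB.map_mem_pos_iff_mem hJ (inv_mem hwJ.1) hγ h0, hneg, h0]

theorem inv_map_notMem_pos_of_relHeight_ne_zero (hB : IsBase R Pos Δ)
    (hwD : IsLongestIn R Δ (weylGroup R) wD) (hw : w ∈ weylGroup R)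
    (hheight : ∀ v, hB.relHeight J (w⁻¹ v) = hB.relHeight J (wD⁻¹ v)) {α : V} (hα : α ∈ Δ)
    (h0 : hB.relHeight J (wD⁻¹ α) ≠ 0) : w⁻¹ α ∉ Pos := by
  have hαΦ := hB.mem_Phi hα
  rw [hB.mem_pos_iff_of_relHeight_eq (map_mem_Phi (inv_mem hw) hαΦ)
    (map_mem_Phi (inv_mem hwD.1) hαΦ) h0 (hheight α)]
  exact fun h => (hB.longest_weylGroup_map_mem_pos_iff hwD.inv hαΦ).mp h (hB.delta_sub hα)

theorem relHeight_inv_map_of_reflTransGen (hB : IsBase R Pos Δ) (hJ : J ⊆ Δ)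
    (hwD : IsLongestIn R Δ (weylGroup R) wD) (hwJ : wJ ∈ WsubJ R J) {u : V ≃ₗ[ℝ] V}
    (hu : Relation.ReflTransGen (IsLeftAscent (refls R Δ) (len R Δ) id) (wD * wJ) u) :
    u ∈ weylGroup R ∧ ∀ v, hB.relHeight J (u⁻¹ v) = hB.relHeight J (wD⁻¹ v) := by
  induction hu with
  | refl =>
    refine ⟨mul_mem hwD.1 (hB.WsubJ_le_weylGroup hJ hwJ), fun v => ?_⟩
    rw [mul_inv_rev, LinearEquiv.mul_apply, hB.relHeight_map hJ (inv_mem hwJ)]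
  | @tail x y _ h ih =>
    obtain ⟨hx, hheight⟩ := ih
    obtain ⟨_, ⟨β, hβ, rfl⟩, rfl, hlt, -⟩ := h
    have hβΦ := hB.mem_Phi hβ
    have hβ0 : hB.relHeight J (wD⁻¹ β) = 0 := by_contra fun h0 =>
      hB.inv_map_notMem_pos_of_relHeight_ne_zero hwD hx hheight hβ h0
        ((hB.lt_len_refl_mul_iff hx hβ).mp hlt)
    refine ⟨mul_mem (refl_mem_weylGroup hβΦ) hx, fun v => ?_⟩
    rw [mul_inv_rev, R.refl_inv, LinearEquiv.mul_apply, hheight, R.refl_apply hβΦ, map_sub,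
      map_smul, map_sub, map_smul, hβ0, smul_zero, sub_zero]

end Descent

end IsBase

/-- Let `J ⊆ Δ`.  The element `z^J = w_Δ w_J` lies in `W^J` and is the
greatest element of `W^J` for `≤_J`; it is the unique maximal element of `W^J` with
respect to `<_J`.  Moreover `z^J ∈ V^J`, and for every `u ∈ W` with `z^J ≤_∅ u` and
every `s ∈ S` with `ℓ(s z^J) < ℓ(z^J)` one has `ℓ(su) < ℓ(u)`. -/
theorem statement_6 {V : Type} [AddCommGroup V] [Module ℝ V]
    (R : RootSystemData V) (Pos Δ : Set V) (hBase : IsBase R Pos Δ)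
    (J : Set V) (hJ : J ⊆ Δ)
    (pJ : (V ≃ₗ[ℝ] V) → (V ≃ₗ[ℝ] V)) (hpJ : IsProjJ R Pos J pJ)
    (wD : V ≃ₗ[ℝ] V) (hwD : IsLongestIn R Δ (weylGroup R) wD)
    (wJ : V ≃ₗ[ℝ] V) (hwJ : IsLongestIn R Δ (WsubJ R J) wJ) :
    (wD * wJ ∈ WupJ R Pos J) ∧
    (∀ w ∈ WupJ R Pos J, w = wD * wJ ∨ ltJ (refls R Δ) (len R Δ) pJ w (wD * wJ)) ∧
    (∀ w ∈ WupJ R Pos J,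
      (∀ w' ∈ WupJ R Pos J, ¬ ltJ (refls R Δ) (len R Δ) pJ w w') → w = wD * wJ) ∧
    (wD * wJ ∈ VupJ R Pos Δ J) ∧
    (∀ u ∈ weylGroup R,
      (wD * wJ = u ∨ ltJ (refls R Δ) (len R Δ) id (wD * wJ) u) →
      ∀ s ∈ refls R Δ, len R Δ (s * (wD * wJ)) < len R Δ (wD * wJ) →
        len R Δ (s * u) < len R Δ u) := by
  have hz := hBase.longest_mul_longest_mem_WupJ hJ hwD hwJ
  have hgreat : ∀ w ∈ WupJ R Pos J,
      w = wD * wJ ∨ ltJ (refls R Δ) (len R Δ) pJ w (wD * wJ) := fun w hw =>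
    (Relation.reflTransGen_iff_eq_or_transGen.mp
      (hBase.reflTransGen_isLeftAscent hJ hpJ hwD hwJ hw)).imp Eq.symm ltJ_of_transGen
  refine ⟨hz, hgreat, fun w hw hmax => (hgreat w hw).resolve_right (hmax _ hz),
    hBase.longest_mul_longest_mem_VupJ hJ hwD hwJ, ?_⟩
  rintro u hu hzu _ ⟨α, hα, rfl⟩ hdesc
  have hclimb : Relation.ReflTransGen (IsLeftAscent (refls R Δ) (len R Δ) id) (wD * wJ) u :=
    hzu.elim (fun h => h ▸ .refl) reflTransGen_of_ltJ_id
  rw [hBase.len_refl_mul_lt_iff hz.1 hα,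
    hBase.longest_mul_longest_inv_map_mem_pos_iff hJ hwD hwJ hα] at hdesc
  obtain ⟨-, hheight⟩ := hBase.relHeight_inv_map_of_reflTransGen hJ hwD hwJ.1 hclimb
  exact (hBase.len_refl_mul_lt_iff hu hα).mpr
    (hBase.inv_map_notMem_pos_of_relHeight_ne_zero hwD hu hheight hα hdesc)

end PaperSp
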